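/- arXiv:0902.3710 — 3 statements merged into one kernel-verified Lean document; each statement's English description precedes it below -/
import Mathlib

section
/- (Lemma 1) Let N ≥ 4 and let q^e = (x^e, y^e) be a placement with pairwise distinct node positions. Suppose the stress matrix Ω of the symmetric stresses ω_ij is positive semidefinite, and the edge parameters satisfy α_ij ω_ij l_ij ≥ 0 for all i ≠ j. Then the second-variation matrix δ²Ṽ(q^e) = [[Ω + L_c^x, L_c^{xy}],[L_c^{xy}, Ω + L_c^y]], with coefficients c_ij = α_ij ω_ij l_ij / (r^e_ij)³, is positive semidefinite. -/
open Finset Matrix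

/-- The stress matrix of symmetric stresses `ω`: off-diagonal entries `-ω i j`,
diagonal entries `∑_{k ≠ i} ω i k`. -/
noncomputable def stressMatrix {N : ℕ} (ω : Fin N → Fin N → ℝ) : Matrix (Fin N) (Fin N) ℝ :=
  Matrix.of fun i j => if i = j then ∑ k ∈ Finset.univ.erase i, ω i k else -ω i j

/-- The `L`-matrix built from coefficients `c` and edge quantities `g`: off-diagonal
entries `-c i j * g i j`, diagonal entries `∑_{k ≠ i} c i k * g i k`. -/
noncomputable def Lmat {N : ℕ} (c g : Fin N → Fin N → ℝ) : Matrix (Fin N) (Fin N) ℝ :=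
  Matrix.of fun i j =>
    if i = j then ∑ k ∈ Finset.univ.erase i, c i k * g i k else -(c i j * g i j)

/-!
Both `Ω` and the `L`-matrices are weighted Laplacians, whose quadratic form is
`½ ∑ᵢⱼ wᵢⱼ (uᵢ - uⱼ)²`. A `2 × 2` block matrix of weighted Laplacians is thus a Laplacian with
`2 × 2` matrix weights, which is positive semidefinite as soon as every weight is. For the blocks
`L_c^x`, `L_c^xy`, `L_c^y` the weights are the rank-one matrices
`cᵢⱼ (qᵢ - qⱼ)(qᵢ - qⱼ)ᵀ`, and the remaining part `diag(Ω, Ω)` inherits positivity from `Ω`.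
-/

theorem posSemidef_fromBlocks_zero {m n R : Type*} [Finite m] [Finite n] [Ring R]
    [PartialOrder R] [StarRing R] [AddLeftMono R] {A : Matrix m m R} {D : Matrix n n R}
    (hA : A.PosSemidef) (hD : D.PosSemidef) : (fromBlocks A 0 0 D).PosSemidef := by
  cases nonempty_fintype m
  cases nonempty_fintype n
  refine .of_dotProduct_mulVec_nonneg (hA.isHermitian.fromBlocks (by simp) hD.isHermitian) ?_
  intro z
  obtain ⟨u, v, rfl⟩ : ∃ u v, z = Sum.elim u v := ⟨_, _, (Sum.elim_comp_inl_inr z).symm⟩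
  simpa [Function.star_sumElim, fromBlocks_mulVec] using
    add_nonneg (hA.dotProduct_mulVec_nonneg u) (hD.dotProduct_mulVec_nonneg v)

section WeightedLaplacian

variable {N : ℕ}

theorem Lmat_eq_stressMatrix (c g : Fin N → Fin N → ℝ) :
    Lmat c g = stressMatrix fun i j => c i j * g i j :=
  rfl

theorem isHermitian_stressMatrix {ω : Fin N → Fin N → ℝ} (hω : ∀ i j, ω i j = ω j i) :
    (stressMatrix ω).IsHermitian := by
  refine IsHermitian.ext fun i j => ?_
  obtain rfl | hij := eq_or_ne i j
  · rfl
  · simp [stressMatrix, hij, hij.symm, hω i j]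

theorem stressMatrix_mulVec_apply (ω : Fin N → Fin N → ℝ) (v : Fin N → ℝ) (i : Fin N) :
    (stressMatrix ω *ᵥ v) i = ∑ j, ω i j * (v i - v j) := by
  have off_diag : ∀ j ∈ univ.erase i, stressMatrix ω i j * v j = -(ω i j * v j) := by
    intro j hj
    simp [stressMatrix, (ne_of_mem_erase hj).symm]
  calc (stressMatrix ω *ᵥ v) i
      = (∑ j ∈ univ.erase i, ω i j) * v i + ∑ j ∈ univ.erase i, -(ω i j * v j) := by
        rw [mulVec_apply_eq_sum, ← add_sum_erase _ _ (mem_univ i), sum_congr rfl off_diag]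
        simp [stressMatrix]
    _ = ∑ j ∈ univ.erase i, ω i j * (v i - v j) := by
        simp only [sum_mul, ← sum_add_distrib, ← sub_eq_add_neg, ← mul_sub]
    _ = ∑ j, ω i j * (v i - v j) := sum_erase _ (by simp)

theorem dotProduct_stressMatrix_mulVec {ω : Fin N → Fin N → ℝ} (hω : ∀ i j, ω i j = ω j i)
    (u v : Fin N → ℝ) :
    u ⬝ᵥ stressMatrix ω *ᵥ v = (∑ i, ∑ j, ω i j * ((u i - u j) * (v i - v j))) / 2 := by
  have expand : u ⬝ᵥ stressMatrix ω *ᵥ v = ∑ i, ∑ j, ω i j * (u i * (v i - v j)) := by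
    simp only [dotProduct, stressMatrix_mulVec_apply, mul_sum, mul_left_comm]
  have expand_swap : u ⬝ᵥ stressMatrix ω *ᵥ v = ∑ i, ∑ j, ω i j * (u j * (v j - v i)) := by
    rw [expand, sum_comm]
    simp only [hω]
  rw [eq_div_iff two_ne_zero, mul_two]
  nth_rw 1 [expand]
  rw [expand_swap]
  simp only [← sum_add_distrib]
  exact sum_congr rfl fun i _ => sum_congr rfl fun j _ => by ring

theorem posSemidef_fromBlocks_stressMatrix {a b d : Fin N → Fin N → ℝ}
    (ha : ∀ i j, a i j = a j i) (hb : ∀ i j, b i j = b j i) (hd : ∀ i j, d i j = d j i)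
    (hW : ∀ i j, i ≠ j → !![a i j, b i j; b i j, d i j].PosSemidef) :
    (fromBlocks (stressMatrix a) (stressMatrix b)
      (stressMatrix b) (stressMatrix d)).PosSemidef := by
  refine .of_dotProduct_mulVec_nonneg ((isHermitian_stressMatrix ha).fromBlocks
    (isHermitian_stressMatrix hb) (isHermitian_stressMatrix hd)) fun z => ?_
  obtain ⟨u, v, rfl⟩ : ∃ u v, z = Sum.elim u v := ⟨_, _, (Sum.elim_comp_inl_inr z).symm⟩
  let e (i j : Fin N) : Fin 2 → ℝ := ![u i - u j, v i - v j]
  have form_eq : star (Sum.elim u v) ⬝ᵥ fromBlocks (stressMatrix a) (stressMatrix b)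
        (stressMatrix b) (stressMatrix d) *ᵥ Sum.elim u v =
      (∑ i, ∑ j, e i j ⬝ᵥ !![a i j, b i j; b i j, d i j] *ᵥ e i j) / 2 := by
    simp only [star_trivial, fromBlocks_mulVec, sumElim_dotProduct_sumElim, Sum.elim_comp_inl,
      Sum.elim_comp_inr, dotProduct_add, dotProduct_stressMatrix_mulVec ha,
      dotProduct_stressMatrix_mulVec hb, dotProduct_stressMatrix_mulVec hd, ← add_div,
      ← sum_add_distrib]
    congr! 3 with i _ j
    simp only [e, dotProduct, mulVec, of_apply, cons_val', cons_val_fin_one, Fin.sum_univ_two,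
      Fin.isValue, cons_val_zero, cons_val_one]
    ring
  rw [form_eq]
  refine div_nonneg (sum_nonneg fun i _ => sum_nonneg fun j _ => ?_) zero_le_two
  obtain rfl | hij := eq_or_ne i j
  · simp [e]
  · simpa using (hW i j hij).dotProduct_mulVec_nonneg (e i j)

end WeightedLaplacian

theorem posSemidef_smul_vecMulVec_fin_two {k : ℝ} (hk : 0 ≤ k) (s t : ℝ) :
    !![k * s ^ 2, k * (s * t); k * (s * t), k * t ^ 2].PosSemidef := by
  have rank_one : !![k * s ^ 2, k * (s * t); k * (s * t), k * t ^ 2] =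
      k • vecMulVec ![s, t] (star ![s, t]) := by
    ext i j
    fin_cases i <;> fin_cases j <;> simp [pow_two, mul_comm]
  exact rank_one ▸ (posSemidef_vecMulVec_self_star _).smul hk

theorem second_variation_posSemidef_general {N : ℕ} (x y : Fin N → ℝ)
    {Ω : Matrix (Fin N) (Fin N) ℝ} (hΩ : Ω.PosSemidef) {c : Fin N → Fin N → ℝ}
    (hc_symm : ∀ i j, c i j = c j i) (hc_nonneg : ∀ i j, i ≠ j → 0 ≤ c i j) :
    (fromBlocks
      (Ω + Lmat c (fun i j => (x i - x j) ^ 2))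
      (Lmat c (fun i j => (x i - x j) * (y i - y j)))
      (Lmat c (fun i j => (x i - x j) * (y i - y j)))
      (Ω + Lmat c (fun i j => (y i - y j) ^ 2))).PosSemidef := by
  have edge_part := posSemidef_fromBlocks_stressMatrix
    (a := fun i j => c i j * (x i - x j) ^ 2) (b := fun i j => c i j * ((x i - x j) * (y i - y j)))
    (d := fun i j => c i j * (y i - y j) ^ 2)
    (fun i j => by rw [hc_symm]; ring) (fun i j => by rw [hc_symm]; ring)
    (fun i j => by rw [hc_symm]; ring)
    (fun i j hij => posSemidef_smul_vecMulVec_fin_two (hc_nonneg i j hij) _ _)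
  simpa only [Lmat_eq_stressMatrix, fromBlocks_add, zero_add] using
    (posSemidef_fromBlocks_zero hΩ hΩ).add edge_part

/-- Lemma 1: if the stress matrix `Ω` is positive semidefinite and
`α_ij ω_ij l_ij ≥ 0` for all `i ≠ j`, then the second-variation matrix
`δ²Ṽ(q^e) = [[Ω + L_c^x, L_c^xy],[L_c^xy, Ω + L_c^y]]`, with coefficients
`c_ij = α_ij ω_ij l_ij / (r^e_ij)³`, is positive semidefinite. -/
theorem second_variation_posSemidef
    {N : ℕ} (hN : 4 ≤ N) (x y : Fin N → ℝ)
    (hdist : ∀ i j : Fin N, i ≠ j → (x i, y i) ≠ (x j, y j))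
    (ω α l : Fin N → Fin N → ℝ)
    (hωs : ∀ i j, ω i j = ω j i) (hαs : ∀ i j, α i j = α j i) (hls : ∀ i j, l i j = l j i)
    (hωd : ∀ i, ω i i = 0)
    (hΩ : (stressMatrix ω).PosSemidef)
    (hαωl : ∀ i j, i ≠ j → 0 ≤ α i j * ω i j * l i j)
    (r : Fin N → Fin N → ℝ)
    (hr : ∀ i j, r i j = Real.sqrt ((x i - x j) ^ 2 + (y i - y j) ^ 2))
    (c : Fin N → Fin N → ℝ)
    (hcdef : ∀ i j, c i j = α i j * ω i j * l i j / (r i j) ^ 3) :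
    (Matrix.fromBlocks
      (stressMatrix ω + Lmat c (fun i j => (x i - x j) ^ 2))
      (Lmat c (fun i j => (x i - x j) * (y i - y j)))
      (Lmat c (fun i j => (x i - x j) * (y i - y j)))
      (stressMatrix ω + Lmat c (fun i j => (y i - y j) ^ 2))).PosSemidef := by
  have hr_symm : ∀ i j, r i j = r j i := fun i j => by
    rw [hr, hr, sub_sq_comm (x i), sub_sq_comm (y i)]
  have hr_nonneg : ∀ i j, 0 ≤ r i j := fun i j => hr i j ▸ Real.sqrt_nonneg _
  exact second_variation_posSemidef_general x y hΩ
    (fun i j => by rw [hcdef, hcdef, hαs, hωs, hls, hr_symm])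
    (fun i j hij => hcdef i j ▸ div_nonneg (hαωl i j hij) (pow_nonneg (hr_nonneg i j) 3))
end

section
/- (Lemma 2) Let N ≥ 4 and let q^e = (x^e, y^e) be a placement with pairwise distinct node positions such that x^e, y^e, 1 are linearly independent. Suppose the stress matrix Ω is positive semidefinite with kernel exactly span{x^e, y^e, 1}, the coefficients c_ij = α_ij ω_ij l_ij / (r^e_ij)³ satisfy c_ij > 0 whenever ω_ij ≠ 0 and c_ij = 0 whenever ω_ij = 0, and the rank-one matrices (q^e_i − q^e_j)(q^e_i − q^e_j)ᵀ over the edges {i,j} with ω_ij ≠ 0 span the 3-dimensional space of symmetric 2×2 real matrices. Then the kernel of the second-variation matrix δ²Ṽ(q^e) = [[Ω + L_c^x, L_c^{xy}],[L_c^{xy}, Ω + L_c^y]] is exactly span{(1, 0), (0, 1), (−y^e, x^e)} ⊂ ℝ^N × ℝ^N. -/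
open Finset Matrix

/-!
The quadratic form of the second-variation matrix at a displacement `(a, b)` is
`aᵀΩa + bᵀΩb + ½ ∑ᵢⱼ cᵢⱼ sᵢⱼ²`, where `sᵢⱼ` is the inner product of the relative position and the
relative displacement of the nodes `i` and `j`. All terms are nonnegative, so on the kernel each of
them vanishes. Vanishing of the first two makes `(a, b)` an affine image of the placement. Vanishing
of the third says that the linear part `B` of this affine map satisfies `vᵀBv = 0` for every edge
vector `v`; as the matrices `vvᵀ` span the symmetric matrices, `B` is skew, that is, a multiple of
the rotation by a right angle.
-/

theorem sum_sum_eq_zero_iff_of_nonneg {ι κ M : Type*} [Fintype ι] [Fintype κ] [AddCommMonoid M]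
    [PartialOrder M] [IsOrderedAddMonoid M] {f : ι → κ → M} (hf : ∀ i j, 0 ≤ f i j) :
    ∑ i, ∑ j, f i j = 0 ↔ ∀ i j, f i j = 0 := by
  simp [sum_eq_zero_iff_of_nonneg, sum_nonneg, hf]

section WeightedLaplacian

variable {ι R : Type*} [Fintype ι] [DecidableEq ι] [CommRing R]

/-- The Laplacian matrix of the weights `w` on the pairs of elements of `ι`; diagonal weights are
ignored. Both `stressMatrix` and `Lmat` are of this form. -/
def weightedLaplacian (w : ι → ι → R) : Matrix ι ι R :=
  Matrix.of fun i j => if i = j then ∑ k ∈ univ.erase i, w i k else -w i j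

theorem weightedLaplacian_mulVec_apply (w : ι → ι → R) (u : ι → R) (i : ι) :
    (weightedLaplacian w *ᵥ u) i = ∑ k, w i k * (u i - u k) := by
  have diagonal : weightedLaplacian w i i = ∑ k ∈ univ.erase i, w i k := if_pos rfl
  have off_diagonal : ∀ k ∈ univ.erase i, weightedLaplacian w i k = -w i k :=
    fun k hk => if_neg (ne_of_mem_erase hk).symm
  rw [mulVec, dotProduct, ← add_sum_erase _ _ (mem_univ i),
    ← add_sum_erase _ (fun k => w i k * (u i - u k)) (mem_univ i), diagonal, sum_mul, sub_self,
    mul_zero, zero_add, ← sum_add_distrib]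
  exact sum_congr rfl fun k hk => by rw [off_diagonal k hk]; ring

theorem two_mul_dotProduct_weightedLaplacian_mulVec {w : ι → ι → R}
    (hw : ∀ i j, w i j = w j i) (u v : ι → R) :
    2 * (u ⬝ᵥ weightedLaplacian w *ᵥ v) = ∑ i, ∑ j, w i j * (u i - u j) * (v i - v j) := by
  have expand : u ⬝ᵥ weightedLaplacian w *ᵥ v = ∑ i, ∑ j, w i j * u i * (v i - v j) := by
    simp only [dotProduct, weightedLaplacian_mulVec_apply, mul_sum]
    exact sum_congr rfl fun i _ => sum_congr rfl fun j _ => by ring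
  have swap : ∑ i, ∑ j, w i j * u i * (v i - v j) = ∑ i, ∑ j, -(w i j * u j * (v i - v j)) := by
    rw [sum_comm]
    exact sum_congr rfl fun i _ => sum_congr rfl fun j _ => by rw [hw j i]; ring
  rw [two_mul, expand]
  nth_rw 2 [swap]
  simp only [← sum_add_distrib]
  exact sum_congr rfl fun i _ => sum_congr rfl fun j _ => by ring

end WeightedLaplacian

section SkewSymmetric

variable {n : Type*} [Fintype n]

theorem trace_mul_eq_zero_of_mem_span {R : Type*} [CommRing R] {S : Set (Matrix n n R)}
    {A B : Matrix n n R} (hB : ∀ C ∈ S, (C * B).trace = 0) (hA : A ∈ Submodule.span R S) :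
    (A * B).trace = 0 := by
  induction hA using Submodule.span_induction with
  | mem C hC => exact hB C hC
  | zero => simp
  | add C D _ _ hC hD => rw [Matrix.add_mul, trace_add, hC, hD, add_zero]
  | smul t C _ hC => rw [Matrix.smul_mul, trace_smul, hC, smul_zero]

theorem transpose_eq_neg_of_trace_mul_eq_zero {B : Matrix n n ℝ}
    (hB : ∀ A : Matrix n n ℝ, A.IsSymm → (A * B).trace = 0) : Bᵀ = -B := by
  have symm : (B + Bᵀ).IsSymm := isSymm_add_transpose_self B
  have trace_transpose_mul : ((B + Bᵀ) * Bᵀ).trace = 0 := by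
    rw [← trace_transpose, transpose_mul, transpose_transpose, symm.eq, trace_mul_comm, hB _ symm]
  have trace_sq : ((B + Bᵀ)ᴴ * (B + Bᵀ)).trace = 0 := by
    rw [conjTranspose_eq_transpose_of_trivial, symm.eq, Matrix.mul_add, trace_add, hB _ symm,
      trace_transpose_mul, add_zero]
  exact eq_neg_of_add_eq_zero_right (trace_conjTranspose_mul_self_eq_zero_iff.mp trace_sq)

end SkewSymmetric

section PlanarFramework

variable {ι : Type*} {x y a b : ι → ℝ}

/-- The position of node `i` relative to node `j` in the planar placement `(x, y)`. The same
expression at a displacement `(a, b)` is the relative displacement of the two nodes. -/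
def edgeVector (x y : ι → ℝ) (i j : ι) : Fin 2 → ℝ :=
  ![x i - x j, y i - y j]

/-- The infinitesimal rigid motions of the planar placement `(x, y)`: the span of the two
translations and of the infinitesimal rotation about the origin. -/
def infinitesimalRigidMotions (x y : ι → ℝ) : Submodule ℝ (ι ⊕ ι → ℝ) :=
  Submodule.span ℝ {Sum.elim (1 : ι → ℝ) (0 : ι → ℝ), Sum.elim (0 : ι → ℝ) (1 : ι → ℝ),
    Sum.elim (-y) x}

theorem edgeVector_dotProduct_edgeVector (x y a b : ι → ℝ) (i j : ι) :
    edgeVector x y i j ⬝ᵥ edgeVector a b i j =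
      (x i - x j) * (a i - a j) + (y i - y j) * (b i - b j) := by
  simp [edgeVector]

theorem edgeVector_affine (x y : ι → ℝ) (B : Matrix (Fin 2) (Fin 2) ℝ) (p q : ℝ) (i j : ι) :
    edgeVector (B 0 0 • x + B 0 1 • y + p • 1) (B 1 0 • x + B 1 1 • y + q • 1) i j =
      B *ᵥ edgeVector x y i j := by
  ext k
  fin_cases k <;> simp [edgeVector, mulVec_eq_sum] <;> ring

theorem sumElim_mem_infinitesimalRigidMotions :
    Sum.elim a b ∈ infinitesimalRigidMotions x y ↔
      ∃ p q t : ℝ, a = p • 1 - t • y ∧ b = q • 1 + t • x := by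
  rw [infinitesimalRigidMotions, Submodule.mem_span_triple]
  refine exists_congr fun p => exists_congr fun q => exists_congr fun t => ?_
  simp [funext_iff, eq_comm, sub_eq_add_neg]

theorem mem_span_and_edgeVector_orthogonal_of_mem_infinitesimalRigidMotions
    (h : Sum.elim a b ∈ infinitesimalRigidMotions x y) :
    a ∈ Submodule.span ℝ {x, y, 1} ∧ b ∈ Submodule.span ℝ {x, y, 1} ∧
      ∀ i j, edgeVector x y i j ⬝ᵥ edgeVector a b i j = 0 := by
  obtain ⟨p, q, t, rfl, rfl⟩ := sumElim_mem_infinitesimalRigidMotions.mp h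
  refine ⟨Submodule.mem_span_triple.mpr ⟨0, -t, p, ?_⟩,
    Submodule.mem_span_triple.mpr ⟨t, 0, q, ?_⟩, fun i j => ?_⟩
  · module
  · module
  · simp only [edgeVector_dotProduct_edgeVector, Pi.sub_apply, Pi.add_apply, Pi.smul_apply,
      Pi.one_apply, smul_eq_mul]
    ring

theorem mem_infinitesimalRigidMotions_of_edgeVector_orthogonal {E : ι → ι → Prop}
    (hE : ∀ A : Matrix (Fin 2) (Fin 2) ℝ, A.IsSymm → A ∈ Submodule.span ℝ
      {C | ∃ i j, E i j ∧ C = vecMulVec (edgeVector x y i j) (edgeVector x y i j)})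
    (ha : a ∈ Submodule.span ℝ {x, y, 1}) (hb : b ∈ Submodule.span ℝ {x, y, 1})
    (horth : ∀ i j, E i j → edgeVector x y i j ⬝ᵥ edgeVector a b i j = 0) :
    Sum.elim a b ∈ infinitesimalRigidMotions x y := by
  obtain ⟨a₁, a₂, p, rfl⟩ := Submodule.mem_span_triple.mp ha
  obtain ⟨b₁, b₂, q, rfl⟩ := Submodule.mem_span_triple.mp hb
  let B : Matrix (Fin 2) (Fin 2) ℝ := !![a₁, a₂; b₁, b₂]
  have skew : Bᵀ = -B := by
    refine transpose_eq_neg_of_trace_mul_eq_zero fun A hA =>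
      trace_mul_eq_zero_of_mem_span ?_ (hE A hA)
    rintro _ ⟨i, j, hij, rfl⟩
    rw [vecMulVec_mul, trace_vecMulVec, dotProduct_comm, ← dotProduct_mulVec,
      ← edgeVector_affine x y B p q]
    exact horth i j hij
  have ha₁ : a₁ = -a₁ := congr_fun₂ skew 0 0
  have hb₂ : b₂ = -b₂ := congr_fun₂ skew 1 1
  have ha₂ : a₂ = -b₁ := congr_fun₂ skew 1 0
  rw [self_eq_neg] at ha₁ hb₂
  subst ha₁ hb₂ ha₂
  exact sumElim_mem_infinitesimalRigidMotions.mpr ⟨p, q, b₁, by module, by module⟩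

end PlanarFramework

section SecondVariation

variable {ι : Type*} [Fintype ι] [DecidableEq ι]

/-- The second-variation matrix `[[Ω + L_c^x, L_c^xy], [L_c^xy, Ω + L_c^y]]` of the placement
`(x, y)`, with an arbitrary matrix `Ω` in the role of the stress matrix. -/
def secondVariation (Ω : Matrix ι ι ℝ) (c : ι → ι → ℝ) (x y : ι → ℝ) :
    Matrix (ι ⊕ ι) (ι ⊕ ι) ℝ :=
  fromBlocks
    (Ω + weightedLaplacian fun i j => c i j * (x i - x j) ^ 2)
    (weightedLaplacian fun i j => c i j * ((x i - x j) * (y i - y j)))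
    (weightedLaplacian fun i j => c i j * ((x i - x j) * (y i - y j)))
    (Ω + weightedLaplacian fun i j => c i j * (y i - y j) ^ 2)

theorem secondVariation_mulVec (Ω : Matrix ι ι ℝ) (c : ι → ι → ℝ) (x y a b : ι → ℝ) :
    secondVariation Ω c x y *ᵥ Sum.elim a b =
      Sum.elim
        (Ω *ᵥ a + fun i =>
          ∑ k, c i k * (x i - x k) * (edgeVector x y i k ⬝ᵥ edgeVector a b i k))
        (Ω *ᵥ b + fun i =>
          ∑ k, c i k * (y i - y k) * (edgeVector x y i k ⬝ᵥ edgeVector a b i k)) := by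
  rw [secondVariation, fromBlocks_mulVec, Sum.elim_comp_inl, Sum.elim_comp_inr, add_mulVec,
    add_mulVec, add_assoc, add_left_comm _ (Ω *ᵥ b)]
  congr 2 <;> ext i <;>
    simp only [Pi.add_apply, weightedLaplacian_mulVec_apply, ← sum_add_distrib,
      edgeVector_dotProduct_edgeVector] <;>
    exact sum_congr rfl fun k _ => by ring

theorem two_mul_dotProduct_secondVariation_mulVec (Ω : Matrix ι ι ℝ) {c : ι → ι → ℝ}
    (x y a b : ι → ℝ) (hc : ∀ i j, c i j = c j i) :
    2 * (Sum.elim a b ⬝ᵥ secondVariation Ω c x y *ᵥ Sum.elim a b) =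
      2 * (a ⬝ᵥ Ω *ᵥ a) + 2 * (b ⬝ᵥ Ω *ᵥ b) +
        ∑ i, ∑ j, c i j * (edgeVector x y i j ⬝ᵥ edgeVector a b i j) ^ 2 := by
  have hxx : ∀ i j, c i j * (x i - x j) ^ 2 = c j i * (x j - x i) ^ 2 :=
    fun i j => by rw [hc i j]; ring
  have hxy : ∀ i j, c i j * ((x i - x j) * (y i - y j)) = c j i * ((x j - x i) * (y j - y i)) :=
    fun i j => by rw [hc i j]; ring
  have hyy : ∀ i j, c i j * (y i - y j) ^ 2 = c j i * (y j - y i) ^ 2 :=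
    fun i j => by rw [hc i j]; ring
  rw [secondVariation, fromBlocks_mulVec, Sum.elim_comp_inl, Sum.elim_comp_inr,
    sumElim_dotProduct_sumElim]
  simp only [add_mulVec, dotProduct_add, mul_add,
    two_mul_dotProduct_weightedLaplacian_mulVec hxx,
    two_mul_dotProduct_weightedLaplacian_mulVec hxy,
    two_mul_dotProduct_weightedLaplacian_mulVec hyy]
  have edge_terms : ∑ i, ∑ j, c i j * (edgeVector x y i j ⬝ᵥ edgeVector a b i j) ^ 2 =
      ∑ i, ∑ j, c i j * (x i - x j) ^ 2 * (a i - a j) * (a i - a j) +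
      ∑ i, ∑ j, c i j * ((x i - x j) * (y i - y j)) * (a i - a j) * (b i - b j) +
      ∑ i, ∑ j, c i j * ((x i - x j) * (y i - y j)) * (b i - b j) * (a i - a j) +
      ∑ i, ∑ j, c i j * (y i - y j) ^ 2 * (b i - b j) * (b i - b j) := by
    simp only [← sum_add_distrib, edgeVector_dotProduct_edgeVector]
    exact sum_congr rfl fun i _ => sum_congr rfl fun j _ => by ring
  linear_combination -edge_terms

variable {Ω : Matrix ι ι ℝ} {c : ι → ι → ℝ} {x y a b : ι → ℝ}

theorem secondVariation_mulVec_eq_zero_iff (hΩ : Ω.PosSemidef) (hc_symm : ∀ i j, c i j = c j i)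
    (hc_nonneg : ∀ i j, 0 ≤ c i j) :
    secondVariation Ω c x y *ᵥ Sum.elim a b = 0 ↔
      Ω *ᵥ a = 0 ∧ Ω *ᵥ b = 0 ∧
        ∀ i j, c i j ≠ 0 → edgeVector x y i j ⬝ᵥ edgeVector a b i j = 0 := by
  constructor
  · intro h
    have form_eq_zero := two_mul_dotProduct_secondVariation_mulVec Ω x y a b hc_symm
    rw [h, dotProduct_zero, mul_zero] at form_eq_zero
    have form_a_nonneg : 0 ≤ a ⬝ᵥ Ω *ᵥ a := hΩ.dotProduct_mulVec_nonneg a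
    have form_b_nonneg : 0 ≤ b ⬝ᵥ Ω *ᵥ b := hΩ.dotProduct_mulVec_nonneg b
    have term_nonneg : ∀ i j, 0 ≤ c i j * (edgeVector x y i j ⬝ᵥ edgeVector a b i j) ^ 2 :=
      fun i j => mul_nonneg (hc_nonneg i j) (sq_nonneg _)
    have sum_nonneg : 0 ≤ ∑ i, ∑ j, c i j * (edgeVector x y i j ⬝ᵥ edgeVector a b i j) ^ 2 :=
      sum_nonneg fun i _ => sum_nonneg fun j _ => term_nonneg i j
    refine ⟨(hΩ.dotProduct_mulVec_zero_iff a).mp (show a ⬝ᵥ Ω *ᵥ a = 0 by linarith),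
      (hΩ.dotProduct_mulVec_zero_iff b).mp (show b ⬝ᵥ Ω *ᵥ b = 0 by linarith),
      fun i j hij => ?_⟩
    have term_eq_zero := (sum_sum_eq_zero_iff_of_nonneg term_nonneg).mp (by linarith) i j
    exact pow_eq_zero_iff two_ne_zero |>.mp ((mul_eq_zero_iff_left hij).mp term_eq_zero)
  · rintro ⟨ha, hb, horth⟩
    have term_eq_zero : ∀ (g : ι → ι → ℝ) i k,
        c i k * g i k * (edgeVector x y i k ⬝ᵥ edgeVector a b i k) = 0 := fun g i k => by
      by_cases hik : c i k = 0
      · rw [hik, zero_mul, zero_mul]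
      · rw [horth i k hik, mul_zero]
    rw [secondVariation_mulVec, ha, hb, zero_add, zero_add]
    ext (i | i)
    · exact sum_eq_zero fun k _ => term_eq_zero (fun i k => x i - x k) i k
    · exact sum_eq_zero fun k _ => term_eq_zero (fun i k => y i - y k) i k

theorem second_variation_kernel_general (hΩ : Ω.PosSemidef)
    (hker : ∀ u, Ω *ᵥ u = 0 ↔ u ∈ Submodule.span ℝ {x, y, 1})
    (hc_symm : ∀ i j, c i j = c j i) (hc_nonneg : ∀ i j, 0 ≤ c i j)
    (hspan : ∀ A : Matrix (Fin 2) (Fin 2) ℝ, A.IsSymm → A ∈ Submodule.span ℝ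
      {C | ∃ i j, c i j ≠ 0 ∧ C = vecMulVec (edgeVector x y i j) (edgeVector x y i j)})
    (u : ι ⊕ ι → ℝ) :
    secondVariation Ω c x y *ᵥ u = 0 ↔ u ∈ infinitesimalRigidMotions x y := by
  rw [← Sum.elim_comp_inl_inr u, secondVariation_mulVec_eq_zero_iff hΩ hc_symm hc_nonneg,
    hker, hker]
  constructor
  · rintro ⟨ha, hb, horth⟩
    exact mem_infinitesimalRigidMotions_of_edgeVector_orthogonal hspan ha hb horth
  · intro h
    obtain ⟨ha, hb, horth⟩ :=
      mem_span_and_edgeVector_orthogonal_of_mem_infinitesimalRigidMotions h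
    exact ⟨ha, hb, fun i j _ => horth i j⟩

end SecondVariation

/-- Lemma 2: under the stated hypotheses, the kernel of the
second-variation matrix `δ²Ṽ(q^e) = [[Ω + L_c^x, L_c^xy],[L_c^xy, Ω + L_c^y]]` is exactly
`span{(1,0), (0,1), (−y^e, x^e)}`. -/
theorem second_variation_kernel
    {N : ℕ} (hN : 4 ≤ N) (x y : Fin N → ℝ)
    (hdist : ∀ i j : Fin N, i ≠ j → (x i, y i) ≠ (x j, y j))
    (hli : LinearIndependent ℝ ![x, y, (1 : Fin N → ℝ)])
    (ω α l : Fin N → Fin N → ℝ)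
    (hωs : ∀ i j, ω i j = ω j i) (hαs : ∀ i j, α i j = α j i) (hls : ∀ i j, l i j = l j i)
    (hωd : ∀ i, ω i i = 0)
    (hΩ : (stressMatrix ω).PosSemidef)
    (hker : ∀ u : Fin N → ℝ, (stressMatrix ω) *ᵥ u = 0 ↔
        u ∈ Submodule.span ℝ ({x, y, (1 : Fin N → ℝ)} : Set (Fin N → ℝ)))
    (r : Fin N → Fin N → ℝ)
    (hr : ∀ i j, r i j = Real.sqrt ((x i - x j) ^ 2 + (y i - y j) ^ 2))
    (c : Fin N → Fin N → ℝ)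
    (hcdef : ∀ i j, c i j = α i j * ω i j * l i j / (r i j) ^ 3)
    (hcpos : ∀ i j, i ≠ j → ω i j ≠ 0 → 0 < c i j)
    (hczero : ∀ i j, i ≠ j → ω i j = 0 → c i j = 0)
    (hspan : ∀ A : Matrix (Fin 2) (Fin 2) ℝ,
      A ∈ Submodule.span ℝ
          {M : Matrix (Fin 2) (Fin 2) ℝ | ∃ i j : Fin N, ω i j ≠ 0 ∧
            M = Matrix.vecMulVec ![x i - x j, y i - y j] ![x i - x j, y i - y j]}
        ↔ A.IsSymm)
    (M : Matrix (Fin N ⊕ Fin N) (Fin N ⊕ Fin N) ℝ)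
    (hM : M = Matrix.fromBlocks
      (stressMatrix ω + Lmat c (fun i j => (x i - x j) ^ 2))
      (Lmat c (fun i j => (x i - x j) * (y i - y j)))
      (Lmat c (fun i j => (x i - x j) * (y i - y j)))
      (stressMatrix ω + Lmat c (fun i j => (y i - y j) ^ 2))) :
    ∀ u : Fin N ⊕ Fin N → ℝ, M *ᵥ u = 0 ↔
      u ∈ Submodule.span ℝ
        ({Sum.elim (1 : Fin N → ℝ) (0 : Fin N → ℝ),
          Sum.elim (0 : Fin N → ℝ) (1 : Fin N → ℝ),
          Sum.elim (-y) x} : Set (Fin N ⊕ Fin N → ℝ)) := by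
  have hc_symm : ∀ i j, c i j = c j i := fun i j => by
    rw [hcdef, hcdef, hαs i j, hωs i j, hls i j, hr i j, hr j i, sub_sq_comm (x i),
      sub_sq_comm (y i)]
  have hc_edge : ∀ i j, ω i j ≠ 0 → 0 < c i j := fun i j hω =>
    hcpos i j (fun hij => hω (hij ▸ hωd i)) hω
  have hc_nonneg : ∀ i j, 0 ≤ c i j := fun i j => by
    by_cases hω : ω i j = 0
    · simp [hcdef, hω]
    · exact (hc_edge i j hω).le
  rw [hM]
  refine second_variation_kernel_general hΩ hker hc_symm hc_nonneg fun A hA => ?_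
  refine Submodule.span_mono ?_ ((hspan A).mpr hA)
  rintro _ ⟨i, j, hω, rfl⟩
  exact ⟨i, j, (hc_edge i j hω).ne', rfl⟩
end

section
/- (Lemma 3) Let a, a', b, b' be four points in ℝ² no three of which are collinear. If the closed segment from a to a' and the closed segment from b to b' intersect, then ‖a − b'‖ + ‖b − a'‖ < ‖a − a'‖ + ‖b − b'‖. In words: if the pairing (a ↦ a', b ↦ b') produces crossing straight-line trajectories, then the swapped pairing (a ↦ b', b ↦ a') has strictly smaller total travelled distance, so a pairing with crossing trajectories does not minimize the total distance travelled. -/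
/-!
Both trajectories pass through a common point `p`, so their total length is
`‖a - p‖ + ‖p - a'‖ + ‖b - p‖ + ‖p - b'‖`. Regrouping, the triangle inequalities through `p` bound
the swapped total by this sum, and in a strictly convex space equality forces `p` to lie between
`a` and `b'` and between `b` and `a'` as well. Then `p` is collinear with each choice of a starting
point and an endpoint; since some starting point and some endpoint differ from `p` when `a ≠ b` and
`a' ≠ b'`, all four points lie on one line.
-/

section Collinear

variable {k V P : Type*} [DivisionRing k] [AddCommGroup V] [Module k V] [AddTorsor V P]

theorem collinear_affineSpan_iff {s : Set P} :
    Collinear k (affineSpan k s : Set P) ↔ Collinear k s := by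
  rw [Collinear, Collinear, ← direction_affineSpan, AffineSubspace.affineSpan_coe,
    direction_affineSpan]

theorem collinear_union_of_forall_collinear {S T : Set P} {p : P}
    (hST : ∀ s ∈ S, ∀ t ∈ T, Collinear k {s, p, t})
    (hS : ∃ x ∈ S, x ≠ p) (hT : ∃ y ∈ T, y ≠ p) : Collinear k (S ∪ T) := by
  obtain ⟨x, hxS, hxp⟩ := hS
  obtain ⟨y, hyT, hyp⟩ := hT
  have hT_line : T ⊆ line[k, x, p] := fun t ht ↦
    (hST x hxS t ht).mem_affineSpan_of_mem_of_ne (by simp) (by simp) (by simp) hxp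
  have hS_line : S ⊆ line[k, x, p] := fun s hs ↦
    have hs_line : s ∈ line[k, y, p] :=
      (hST s hs y hyT).mem_affineSpan_of_mem_of_ne (by simp) (by simp) (by simp) hyp
    affineSpan_pair_le_of_mem_of_mem (hT_line hyT) (right_mem_affineSpan_pair k x p) hs_line
  exact (collinear_affineSpan_iff.mpr (collinear_pair k x p)).subset
    (Set.union_subset hS_line hT_line)

end Collinear

section StrictConvexSpace

variable {V P : Type*} [NormedAddCommGroup V] [NormedSpace ℝ V] [StrictConvexSpace ℝ V]
  [MetricSpace P] [NormedAddTorsor V P] {a a' b b' p : P}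

theorem dist_add_dist_swap_lt_iff_of_wbtw (ha : Wbtw ℝ a p a') (hb : Wbtw ℝ b p b') :
    dist a b' + dist b a' < dist a a' + dist b b' ↔ ¬(Wbtw ℝ a p b' ∧ Wbtw ℝ b p a') := by
  have hab' := dist_triangle a p b'
  have hba' := dist_triangle b p a'
  rw [← dist_add_dist_eq_iff, ← dist_add_dist_eq_iff, ← ha.dist_add_dist, ← hb.dist_add_dist]
  grind

theorem dist_add_dist_swap_lt_of_wbtw (hab : a ≠ b) (hab' : a' ≠ b')
    (hcol : ¬Collinear ℝ {a, a', b, b'}) (ha : Wbtw ℝ a p a') (hb : Wbtw ℝ b p b') :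
    dist a b' + dist b a' < dist a a' + dist b b' := by
  rw [dist_add_dist_swap_lt_iff_of_wbtw ha hb]
  rintro ⟨hswap, hswap'⟩
  have hunion : Collinear ℝ ({a, b} ∪ {a', b'}) :=
    collinear_union_of_forall_collinear (p := p)
      (by simp [ha.collinear, hb.collinear, hswap.collinear, hswap'.collinear])
      ((Set.nontrivial_pair hab).exists_ne p) ((Set.nontrivial_pair hab').exists_ne p)
  exact hcol (hunion.subset (by grind))

end StrictConvexSpace

theorem crossing_pairing_not_minimal_general {E : Type*} [NormedAddCommGroup E] [NormedSpace ℝ E]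
    [StrictConvexSpace ℝ E] {a a' b b' : E} (hab : a ≠ b) (hab' : a' ≠ b')
    (hcol : ¬Collinear ℝ {a, a', b, b'}) (hcross : (segment ℝ a a' ∩ segment ℝ b b').Nonempty) :
    ‖a - b'‖ + ‖b - a'‖ < ‖a - a'‖ + ‖b - b'‖ := by
  obtain ⟨p, hpa, hpb⟩ := hcross
  simpa only [dist_eq_norm] using dist_add_dist_swap_lt_of_wbtw hab hab' hcol
    (mem_segment_iff_wbtw.mp hpa) (mem_segment_iff_wbtw.mp hpb)

/-- Lemma 3: for four points `a, a', b, b'` in the plane, no three of which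
are collinear, if the closed segments `[a, a']` and `[b, b']` intersect, then
`‖a − b'‖ + ‖b − a'‖ < ‖a − a'‖ + ‖b − b'‖`: the swapped pairing has strictly smaller
total travelled distance, so a pairing with crossing trajectories is not minimizing. -/
theorem crossing_pairing_not_minimal
    (a a' b b' : EuclideanSpace ℝ (Fin 2))
    (h1 : ¬ Collinear ℝ ({a, a', b} : Set (EuclideanSpace ℝ (Fin 2))))
    (h2 : ¬ Collinear ℝ ({a, a', b'} : Set (EuclideanSpace ℝ (Fin 2))))
    (h3 : ¬ Collinear ℝ ({a, b, b'} : Set (EuclideanSpace ℝ (Fin 2))))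
    (h4 : ¬ Collinear ℝ ({a', b, b'} : Set (EuclideanSpace ℝ (Fin 2))))
    (hcross : (segment ℝ a a' ∩ segment ℝ b b').Nonempty) :
    ‖a - b'‖ + ‖b - a'‖ < ‖a - a'‖ + ‖b - b'‖ :=
  crossing_pairing_not_minimal_general (ne₁₂_of_not_collinear h3) (ne₂₃_of_not_collinear h2)
    (fun hcol ↦ h1 (hcol.subset (by grind))) hcross
end
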